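/- On the negative-coupling side the Ward-constrained melonic flow has exactly one nontrivial fixed point, namely p₁: if ḡ < 0, m̄² > −1, (1+m̄²)⁵ − Ω′(ḡ,m̄²) ≠ 0, and β_m(ḡ,m̄²) = 0 and β_g(ḡ,m̄²) = 0, then m̄² = 5/4 and ḡ = −81/(64π²). (For ḡ < 0 and m̄² > −1 one has Ω(ḡ,m̄²) = (1+m̄²)² − π²ḡ > 0, so the fixed-point condition forces η = 0, and the η = 0 fixed point is unique.) -/

import Mathlib

open Real

/-- `Ω(ḡ, m̄²) := (1 + m̄²)² − π²ḡ`. -/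
noncomputable def Omega (g m : ℝ) : ℝ := (1 + m) ^ 2 - π ^ 2 * g

/-- `Ω′(ḡ, m̄²) := π²ḡ(1+m̄²)³(1 − 8/(3(1+m̄²)²)) + 6π⁴ḡ²`. -/
noncomputable def OmegaP (g m : ℝ) : ℝ :=
  π ^ 2 * g * (1 + m) ^ 3 * (1 - 8 / (3 * (1 + m) ^ 2)) + 6 * π ^ 4 * g ^ 2

/-- The Ward-constrained melonic anomalous dimension
`η(ḡ, m̄²) := 4π²ḡ((1+m̄²)³ + 9π²ḡ) / ((1+m̄²)⁵ − Ω′(ḡ, m̄²))`. -/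
noncomputable def eta (g m : ℝ) : ℝ :=
  4 * π ^ 2 * g * ((1 + m) ^ 3 + 9 * π ^ 2 * g) / ((1 + m) ^ 5 - OmegaP g m)

/-- `β_m = −(2+η)m̄² − 10π²ḡ(1+η/6)/(1+m̄²)²` for the Ward-constrained melonic flow. -/
noncomputable def betaM (g m : ℝ) : ℝ :=
  -(2 + eta g m) * m - 10 * π ^ 2 * g * (1 + eta g m / 6) / (1 + m) ^ 2

/-- `β_g = −ηḡΩ/(1+m̄²)² + 2π²ḡ²β_m/(1+m̄²)³` for the Ward-constrained melonic flow. -/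
noncomputable def betaG (g m : ℝ) : ℝ :=
  -eta g m * g * Omega g m / (1 + m) ^ 2 + 2 * π ^ 2 * g ^ 2 * betaM g m / (1 + m) ^ 3

/-!
Where `β_m = 0`, the second beta function is just `β_g = -ηgΩ/(1+m)²`, so fixed points off the
curves `g = 0` and `Ω = 0` have `η = 0`. Both remaining conditions, the vanishing of the numerator
of `η` and of `β_m` at `η = 0`, are linear in `π²g`; eliminating it leaves `(1+m)²(4m - 5) = 0`.
-/

section

variable {g m : ℝ}

lemma omega_pos_of_neg (hg : g < 0) : 0 < Omega g m := by
  have hπg : π ^ 2 * g < 0 := mul_neg_of_pos_of_neg (by positivity) hg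
  unfold Omega
  linarith [sq_nonneg (1 + m)]

lemma eta_eq_zero_iff (hg : g ≠ 0) (hden : (1 + m) ^ 5 - OmegaP g m ≠ 0) :
    eta g m = 0 ↔ (1 + m) ^ 3 + 9 * π ^ 2 * g = 0 := by
  simp [eta, hg, hden, pi_ne_zero]

lemma betaG_eq_zero_iff_of_betaM_eq_zero (hg : g ≠ 0) (hm : 1 + m ≠ 0) (hΩ : Omega g m ≠ 0)
    (hβm : betaM g m = 0) : betaG g m = 0 ↔ eta g m = 0 := by
  simp [betaG, hβm, hg, hm, hΩ]

lemma betaM_eq_zero_iff_of_eta_eq_zero (hm : 1 + m ≠ 0) (hη : eta g m = 0) :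
    betaM g m = 0 ↔ m * (1 + m) ^ 2 + 5 * π ^ 2 * g = 0 := by
  have hβm : betaM g m = -2 * (m * (1 + m) ^ 2 + 5 * π ^ 2 * g) / (1 + m) ^ 2 := by
    rw [betaM, hη]
    field_simp
    ring
  simp [hβm, hm]

lemma eta_numerator_and_betaM_numerator_eq_zero_iff (hm : 1 + m ≠ 0) :
    (1 + m) ^ 3 + 9 * π ^ 2 * g = 0 ∧ m * (1 + m) ^ 2 + 5 * π ^ 2 * g = 0 ↔
      m = 5 / 4 ∧ g = -81 / (64 * π ^ 2) := by
  constructor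
  · rintro ⟨hη, hβm⟩
    have helim : (1 + m) ^ 2 * (4 * m - 5) = 0 := by linear_combination 9 * hβm - 5 * hη
    have hm_eq : m = 5 / 4 := by
      linarith [(mul_eq_zero.mp helim).resolve_left (pow_ne_zero 2 hm)]
    refine ⟨hm_eq, ?_⟩
    rw [hm_eq] at hη
    rw [eq_div_iff (by positivity)]
    linarith
  · rintro ⟨rfl, rfl⟩
    constructor <;> field_simp <;> norm_num

theorem negative_coupling_unique_fixed_point_general (hg : g ≠ 0) (hm : m ≠ -1)
    (hΩ : Omega g m ≠ 0) (hden : (1 + m) ^ 5 - OmegaP g m ≠ 0) :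
    betaM g m = 0 ∧ betaG g m = 0 ↔ m = 5 / 4 ∧ g = -81 / (64 * π ^ 2) := by
  have hm_add : 1 + m ≠ 0 := fun h => hm (by linarith)
  calc
    betaM g m = 0 ∧ betaG g m = 0 ↔ betaM g m = 0 ∧ eta g m = 0 :=
      and_congr_right (betaG_eq_zero_iff_of_betaM_eq_zero hg hm_add hΩ)
    _ ↔ eta g m = 0 ∧ betaM g m = 0 := and_comm
    _ ↔ eta g m = 0 ∧ m * (1 + m) ^ 2 + 5 * π ^ 2 * g = 0 :=
      and_congr_right (betaM_eq_zero_iff_of_eta_eq_zero hm_add)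
    _ ↔ (1 + m) ^ 3 + 9 * π ^ 2 * g = 0 ∧ m * (1 + m) ^ 2 + 5 * π ^ 2 * g = 0 :=
      and_congr_left' (eta_eq_zero_iff hg hden)
    _ ↔ m = 5 / 4 ∧ g = -81 / (64 * π ^ 2) :=
      eta_numerator_and_betaM_numerator_eq_zero_iff hm_add

end

/-- On the negative-coupling side the Ward-constrained melonic flow has exactly one
nontrivial fixed point, namely `p₁ = (m̄², ḡ) = (5/4, −81/(64π²))`. (For `ḡ < 0` and
`m̄² > −1` one has `Ω = (1+m̄²)² − π²ḡ > 0`, so the fixed-point condition forces `η = 0`,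
and the `η = 0` fixed point is unique.) -/
theorem negative_coupling_unique_fixed_point (g m : ℝ) (hg : g < 0) (hm : -1 < m)
    (hden : (1 + m) ^ 5 - OmegaP g m ≠ 0)
    (hβm : betaM g m = 0) (hβg : betaG g m = 0) :
    m = 5 / 4 ∧ g = -81 / (64 * π ^ 2) :=
  (negative_coupling_unique_fixed_point_general hg.ne hm.ne' (omega_pos_of_neg hg).ne' hden).mp
    ⟨hβm, hβg⟩
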